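/- Let b(m,n) denote the number of bipartite graphs on [m] ⊎ [n] with no all-seeing vertex on either side, at least one isolated vertex in [m], and no isolated vertex in [n]. Then, as formal power series in x over ℚ, Σ_{m,n ≥ 1} b(m,n) · x^{m+n}/(m! n!) = (1 − e^{−x})·((2e^{−x} − 1)·Ψ(x) − 1), where Ψ(x) = Σ_{m,n ≥ 0} 2^{mn} x^{m+n}/(m! n!) and e^{−x} is the power series Σ_{k ≥ 0} (−1)^k x^k/k!. -/

import Mathlib

/-- `R` has no all-seeing vertex on either side. -/
def NoAllSeeing {m n : ℕ} (R : Finset (Fin m × Fin n)) : Prop :=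
  (∀ i : Fin m, ¬ ∀ j : Fin n, (i, j) ∈ R) ∧ (∀ j : Fin n, ¬ ∀ i : Fin m, (i, j) ∈ R)

/-- vertex `i ∈ [m]` is isolated in `R`. -/
def IsolatedLeft {m n : ℕ} (R : Finset (Fin m × Fin n)) (i : Fin m) : Prop :=
  ∀ j : Fin n, (i, j) ∉ R

/-- vertex `j ∈ [n]` is isolated in `R`. -/
def IsolatedRight {m n : ℕ} (R : Finset (Fin m × Fin n)) (j : Fin n) : Prop :=
  ∀ i : Fin m, (i, j) ∉ R

/-- `Ψ(x) = Σ_{m,n ≥ 0} 2^{mn} x^{m+n}/(m! n!)`. -/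
noncomputable def Psi : PowerSeries ℚ :=
  PowerSeries.mk fun N =>
    ∑ p ∈ Finset.HasAntidiagonal.antidiagonal N, (2 : ℚ) ^ (p.1 * p.2) / (p.1.factorial * p.2.factorial)

/-- `e^{-x} = Σ_{k ≥ 0} (-1)^k x^k / k!`. -/
noncomputable def ExpNeg : PowerSeries ℚ :=
  PowerSeries.mk fun k => (-1 : ℚ) ^ k / k.factorial

/-- The egf `Σ_{m,n ≥ 1} b(m,n) x^{m+n}/(m! n!)` of a double sequence `b`. -/
noncomputable def egf2 (b : ℕ → ℕ → ℕ) : PowerSeries ℚ :=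
  PowerSeries.mk fun N =>
    ∑ p ∈ (Finset.HasAntidiagonal.antidiagonal N).filter (fun p => 1 ≤ p.1 ∧ 1 ≤ p.2),
      (b p.1 p.2 : ℚ) / (p.1.factorial * p.2.factorial)

/-- graphs with no all-seeing vertex, at least one isolated vertex in `[m]`,
and no isolated vertex in `[n]`. -/
noncomputable def bIsoNoIso (m n : ℕ) : ℕ :=
  Nat.card {R : Finset (Fin m × Fin n) // NoAllSeeing R ∧
    (∃ i, IsolatedLeft R i) ∧ (∀ j, ¬ IsolatedRight R j)}

open Finset in
lemma row_count (m n : ℕ) (P : Finset (Fin n) → Prop) [DecidablePred P] :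
    ((univ : Finset (Finset (Fin m × Fin n))).filter
      (fun R => ∀ i, P (univ.filter (fun j => (i, j) ∈ R)))).card
      = ((univ : Finset (Finset (Fin n))).filter P).card ^ m := by
  have h := Fintype.card_piFinset_const ((univ : Finset (Finset (Fin n))).filter P) m
  rw [← h]
  refine Finset.card_nbij' (fun R i => univ.filter (fun j => (i, j) ∈ R))
    (fun g => univ.filter (fun p => p.2 ∈ g p.1)) ?_ ?_ ?_ ?_
  · intro R hR
    simpa using hR
  · intro g hg
    simpa using hg
  · intro R hR
    ext p
    simp
  · intro g hg
    funext i
    ext j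
    simp

open Finset in
lemma col_count (m n : ℕ) (P : Finset (Fin m) → Prop) [DecidablePred P] :
    ((univ : Finset (Finset (Fin m × Fin n))).filter
      (fun R => ∀ j, P (univ.filter (fun i => (i, j) ∈ R)))).card
      = ((univ : Finset (Finset (Fin m))).filter P).card ^ n := by
  have h := Fintype.card_piFinset_const ((univ : Finset (Finset (Fin m))).filter P) n
  rw [← h]
  refine Finset.card_nbij' (fun R j => univ.filter (fun i => (i, j) ∈ R))
    (fun g => univ.filter (fun p => p.1 ∈ g p.2)) ?_ ?_ ?_ ?_
  · intro R hR
    simpa using hR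
  · intro g hg
    simpa using hg
  · intro R hR
    ext p
    simp
  · intro g hg
    funext i
    ext j
    simp

/-- the double egf on the diagonal -/
noncomputable def GG (f : ℕ → ℕ → ℚ) : PowerSeries ℚ :=
  PowerSeries.mk fun N =>
    ∑ p ∈ Finset.HasAntidiagonal.antidiagonal N, f p.1 p.2 / (p.1.factorial * p.2.factorial)

noncomputable def opL (f : ℕ → ℕ → ℚ) (m n : ℕ) : ℚ :=
  ∑ k ∈ Finset.range (m + 1), (-1) ^ k * (m.choose k : ℚ) * f (m - k) n

lemma GG_swap (f : ℕ → ℕ → ℚ) : GG (fun m n => f n m) = GG f := by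
  ext N
  simp only [GG, PowerSeries.coeff_mk]
  refine Finset.sum_nbij' Prod.swap Prod.swap ?_ ?_ ?_ ?_ ?_
  · rintro ⟨a, b⟩ h
    simp only [Prod.swap, Finset.HasAntidiagonal.mem_antidiagonal] at h ⊢
    omega
  · rintro ⟨a, b⟩ h
    simp only [Prod.swap, Finset.HasAntidiagonal.mem_antidiagonal] at h ⊢
    omega
  · rintro ⟨a, b⟩ h
    rfl
  · rintro ⟨a, b⟩ h
    rfl
  · rintro ⟨a, b⟩ h
    simp [mul_comm]

lemma expNeg_mul_GG (f : ℕ → ℕ → ℚ) : ExpNeg * GG f = GG (opL f) := by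
  ext N
  simp only [GG, ExpNeg, PowerSeries.coeff_mul, PowerSeries.coeff_mk, opL]
  have h : ∀ m n : ℕ, (∑ k ∈ Finset.range (m + 1), (-1) ^ k * (m.choose k : ℚ) * f (m - k) n)
      / (m.factorial * n.factorial) = ∑ q ∈ Finset.HasAntidiagonal.antidiagonal m,
      (-1) ^ q.1 / (q.1.factorial : ℚ) * (f q.2 n / (q.2.factorial * n.factorial)) := by
    intro m n
    rw [Finset.Nat.sum_antidiagonal_eq_sum_range_succ_mk, Finset.sum_div]
    refine Finset.sum_congr rfl fun k hk => ?_
    have hk' : k ≤ m := Nat.lt_succ_iff.mp (Finset.mem_range.mp hk)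
    rw [Nat.cast_choose ℚ hk']
    have := Nat.factorial_ne_zero m
    field_simp
  simp only [h, Finset.mul_sum]
  rw [Finset.sum_sigma', Finset.sum_sigma']
  refine Finset.sum_nbij' (fun x => ⟨(x.1.1 + x.2.1, x.2.2), (x.1.1, x.2.1)⟩)
    (fun x => ⟨(x.2.1, x.2.2 + x.1.2), (x.2.2, x.1.2)⟩) ?_ ?_ ?_ ?_ ?_
  · rintro ⟨⟨a, b⟩, ⟨c, d⟩⟩ h
    simp only [Finset.mem_sigma, Finset.HasAntidiagonal.mem_antidiagonal] at h ⊢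
    obtain ⟨h1, h2⟩ := h
    refine ⟨?_, ?_⟩
    · omega
    · first | rfl | trivial
  · rintro ⟨⟨a, b⟩, ⟨c, d⟩⟩ h
    simp only [Finset.mem_sigma, Finset.HasAntidiagonal.mem_antidiagonal] at h ⊢
    obtain ⟨h1, h2⟩ := h
    refine ⟨?_, ?_⟩
    · omega
    · first | rfl | trivial
  · rintro ⟨⟨a, b⟩, ⟨c, d⟩⟩ h
    simp only [Finset.mem_sigma, Finset.HasAntidiagonal.mem_antidiagonal] at h
    obtain ⟨h1, rfl⟩ := h
    rfl
  · rintro ⟨⟨a, b⟩, ⟨c, d⟩⟩ h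
    simp only [Finset.mem_sigma, Finset.HasAntidiagonal.mem_antidiagonal] at h
    obtain ⟨h1, rfl⟩ := h
    rfl
  · rintro ⟨⟨a, b⟩, ⟨c, d⟩⟩ h
    rfl

lemma opL_pow (c : ℕ → ℚ) : opL (fun m n => c n ^ m) = fun m n => (c n - 1) ^ m := by
  funext m n
  rw [opL, sub_eq_neg_add, add_pow]
  refine Finset.sum_congr rfl fun k _ => by ring

lemma E_row (c : ℕ → ℚ) : ExpNeg * GG (fun m n => c n ^ m) = GG fun m n => (c n - 1) ^ m := by
  rw [expNeg_mul_GG, opL_pow]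

lemma E_col (c : ℕ → ℚ) : ExpNeg * GG (fun m n => c m ^ n) = GG fun m n => (c m - 1) ^ n := by
  rw [← GG_swap, E_row, ← GG_swap]

/-- number of graphs without isolated vertices -/
noncomputable def SS : ℕ → ℕ → ℚ := opL (fun m n => (2 ^ m - 1) ^ n)

open Finset in
lemma count_S (m n : ℕ) :
    (∑ R : Finset (Fin m × Fin n), if (∀ i, ∃ j, (i, j) ∈ R) ∧ (∀ j, ∃ i, (i, j) ∈ R)
      then (1 : ℚ) else 0) = SS m n := by
  have h := Finset.inclusion_exclusion_sum_inf_compl (univ : Finset (Fin m))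
    (fun i => (univ : Finset (Finset (Fin m × Fin n))).filter (fun R => ∀ j, (i, j) ∉ R))
    (fun R => if ∀ j, ∃ i, (i, j) ∈ R then (1 : ℚ) else 0)
  have key : ∀ t : Finset (Fin m), (∑ R ∈ t.inf (fun i => (univ : Finset (Finset (Fin m × Fin n))).filter (fun R => ∀ j, (i, j) ∉ R)),
     if ∀ j, ∃ i, (i, j) ∈ R then (1 : ℚ) else 0) = (2 ^ (m - t.card) - 1) ^ n := by
    intro t
    have hc := col_count m n (fun s => s ∈ tᶜ.powerset.erase ∅)
    have h2 : (univ.filter (fun s => s ∈ tᶜ.powerset.erase ∅)).card = 2 ^ (m - t.card) - 1 := by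
      rw [Finset.filter_mem_eq_inter, univ_inter, card_erase_of_mem (by simp), card_powerset, card_compl,
        Fintype.card_fin]
    rw [h2] at hc
    have h3 : ((2 : ℚ) ^ (m - t.card) - 1) ^ n = ((2 ^ (m - t.card) - 1 : ℕ) ^ n : ℕ) := by
      push_cast [Nat.one_le_two_pow]
      rfl
    rw [h3, ← hc, ← Finset.sum_filter, Finset.sum_const, nsmul_eq_mul, mul_one]
    congr 2
    ext R
    simp only [Finset.mem_filter, Finset.mem_inf, Finset.mem_univ, true_and, Finset.mem_erase, Finset.mem_powerset, Finset.subset_iff, Finset.mem_compl, ne_eq, Finset.filter_eq_empty_iff]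
    push Not
    constructor
    · rintro ⟨a, b⟩ j
      obtain ⟨i, hi⟩ := b j
      exact ⟨⟨i, trivial, hi⟩, fun x hx hxt => a x hxt j hx⟩
    · intro a
      refine ⟨fun i hi j hx => (a j).2 hx hi, fun j => ?_⟩
      obtain ⟨i, _, hi⟩ := (a j).1
      exact ⟨i, hi⟩
  simp only [key] at h
  rw [Finset.sum_powerset_apply_card (fun k => (-1 : ℤ) ^ k • ((2 : ℚ) ^ (m - k) - 1) ^ n)] at h
  rw [SS, opL]
  simp only [card_univ, Fintype.card_fin] at h
  have h5 : ∀ k, (-1 : ℚ) ^ k * (m.choose k : ℚ) * (2 ^ (m - k) - 1) ^ n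
     = (m.choose k) • ((-1 : ℤ) ^ k • ((2 : ℚ) ^ (m - k) - 1) ^ n) := by
    intro k
    simp only [nsmul_eq_mul, zsmul_eq_mul]
    push_cast
    ring
  simp only [h5]
  rw [← h, ← Finset.sum_filter, ← Finset.sum_filter, Finset.sum_filter, Finset.sum_filter]
  rw [← Finset.sum_filter, ← Finset.sum_filter]
  apply Finset.sum_congr _ (fun _ _ => rfl)
  ext R
  simp [Finset.mem_inf]

open Finset in
lemma b_eq (m n : ℕ) (hn : 1 ≤ n) :
    (bIsoNoIso m n : ℚ) = (2 ^ m - 1) ^ n - SS m n - (2 ^ n) ^ m + 2 * (2 ^ n - 1) ^ m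
      - (2 ^ n - 1 - 1) ^ m := by
  classical
  have sumE : ∀ (P : Finset (Fin m × Fin n) → Prop) [DecidablePred P],
      (∑ R, if P R then (1 : ℚ) else 0) = ((univ.filter P).card : ℚ) := by
    intro P _
    simp
  have c1 : (∑ R : Finset (Fin m × Fin n), if (∀ j, ∃ i, (i, j) ∈ R) then (1 : ℚ) else 0)
      = (2 ^ m - 1) ^ n := by
    have hc := col_count m n (fun s => s ∈ (univ : Finset (Finset (Fin m))).erase ∅)
    rw [Finset.filter_mem_eq_inter, univ_inter, card_erase_of_mem (by simp), card_univ, Fintype.card_finset, Fintype.card_fin] at hc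
    have : ((2 : ℚ) ^ m - 1) ^ n = ((2 ^ m - 1 : ℕ) ^ n : ℕ) := by
      push_cast [Nat.one_le_two_pow]; rfl
    rw [this, ← hc, sumE]
    congr 2
    ext R
    simp [Finset.filter_eq_empty_iff]
  have c2 : (∑ R : Finset (Fin m × Fin n), if (∀ i, ∃ j, (i, j) ∈ R) then (1 : ℚ) else 0)
      = (2 ^ n - 1) ^ m := by
    have hc := row_count m n (fun s => s ∈ (univ : Finset (Finset (Fin n))).erase ∅)
    rw [Finset.filter_mem_eq_inter, univ_inter, card_erase_of_mem (by simp), card_univ, Fintype.card_finset, Fintype.card_fin] at hc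
    have : ((2 : ℚ) ^ n - 1) ^ m = ((2 ^ n - 1 : ℕ) ^ m : ℕ) := by
      push_cast [Nat.one_le_two_pow]; rfl
    rw [this, ← hc, sumE]
    congr 2
    ext R
    simp [Finset.filter_eq_empty_iff]
  have fUniv : ∀ (p : Fin n → Prop) [DecidablePred p], (univ.filter p = univ) = ∀ j, p j := by
    intro p _
    simp [Finset.filter_eq_self]
  have c3 : (∑ R : Finset (Fin m × Fin n), if (∀ i, ∃ j, (i, j) ∉ R) then (1 : ℚ) else 0)
      = (2 ^ n - 1) ^ m := by
    have hc := row_count m n (fun s => s ∈ (univ : Finset (Finset (Fin n))).erase univ)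
    rw [Finset.filter_mem_eq_inter, univ_inter, card_erase_of_mem (by simp), card_univ, Fintype.card_finset, Fintype.card_fin] at hc
    have : ((2 : ℚ) ^ n - 1) ^ m = ((2 ^ n - 1 : ℕ) ^ m : ℕ) := by
      push_cast [Nat.one_le_two_pow]; rfl
    rw [this, ← hc, sumE]
    congr 2
    ext R
    simp [fUniv]
  have c4 : (∑ R : Finset (Fin m × Fin n), if (∀ i, ∃ j, (i, j) ∉ R) ∧ (∀ i, ∃ j, (i, j) ∈ R) then (1 : ℚ) else 0)
      = (2 ^ n - 1 - 1) ^ m := by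
    have hc := row_count m n (fun s => s ∈ ((univ : Finset (Finset (Fin n))).erase univ).erase ∅)
    have hne : (∅ : Finset (Fin n)) ≠ univ := by
      intro h
      have := congrArg Finset.card h
      simp at this
      omega
    rw [Finset.filter_mem_eq_inter, univ_inter, card_erase_of_mem (by simp [hne]), card_erase_of_mem (by simp), card_univ, Fintype.card_finset, Fintype.card_fin] at hc
    have : ((2 : ℚ) ^ n - 1 - 1) ^ m = ((2 ^ n - 1 - 1 : ℕ) ^ m : ℕ) := by
      have h2 : 2 ≤ 2 ^ n := by
        calc 2 = 2 ^ 1 := rfl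
          _ ≤ 2 ^ n := Nat.pow_le_pow_right (by norm_num) hn
      obtain ⟨d, hd⟩ := Nat.exists_eq_add_of_le h2
      have hd' : (2 : ℚ) ^ n = 2 + d := by exact_mod_cast hd
      have : 2 ^ n - 1 - 1 = d := by omega
      rw [this, hd']
      push_cast
      ring
    rw [this, ← hc, sumE]
    congr 2
    ext R
    simp only [Finset.mem_filter, Finset.mem_univ, true_and, Finset.mem_erase, ne_eq, Finset.filter_eq_empty_iff, fUniv]
    push Not
    simp [forall_and, and_comm]
  have c5 : (∑ R : Finset (Fin m × Fin n), (1 : ℚ)) = (2 ^ n) ^ m := by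
    simp [← pow_mul, mul_comm]
  have c6 := count_S m n
  have c0 : (bIsoNoIso m n : ℚ) = ∑ R : Finset (Fin m × Fin n), if (NoAllSeeing R ∧
    (∃ i, IsolatedLeft R i) ∧ (∀ j, ¬ IsolatedRight R j)) then (1 : ℚ) else 0 := by
    rw [sumE, bIsoNoIso, Nat.card_eq_fintype_card, Fintype.card_subtype]
  rw [c0, ← c1, ← c6, ← c5, two_mul, ← c4]
  nth_rewrite 1 [← c2]
  rw [← c3]
  simp only [← Finset.sum_add_distrib, ← Finset.sum_sub_distrib]
  refine Finset.sum_congr rfl fun R _ => ?_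
  have e1 : (NoAllSeeing R ∧ (∃ i, IsolatedLeft R i) ∧ (∀ j, ¬ IsolatedRight R j)) ↔
      ((∀ i, ∃ j, (i, j) ∉ R) ∧ ¬ (∀ i, ∃ j, (i, j) ∈ R) ∧ (∀ j, ∃ i, (i, j) ∈ R)) := by
    simp only [NoAllSeeing, IsolatedLeft, IsolatedRight]
    push Not
    constructor
    · rintro ⟨⟨a, b⟩, c, d⟩
      exact ⟨a, c, d⟩
    · rintro ⟨a, ⟨i, c⟩, d⟩
      exact ⟨⟨a, fun j => ⟨i, c j⟩⟩, ⟨i, c⟩, d⟩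
  have e2 : (¬ ∀ i, ∃ j, (i, j) ∉ R) → (∀ j, ∃ i, (i, j) ∈ R) := by
    intro h
    push Not at h
    obtain ⟨i, hi⟩ := h
    exact fun j => ⟨i, hi j⟩
  simp only [e1]
  by_cases hA : ∀ i, ∃ j, (i, j) ∉ R <;> by_cases hB : ∀ i, ∃ j, (i, j) ∈ R <;>
    by_cases hC : ∀ j, ∃ i, (i, j) ∈ R
  all_goals first
    | exact absurd (e2 hA) hC
    | (simp only [hA, hB, hC, if_true, if_false, and_true, true_and, not_true, not_false_iff, and_false, false_and]; norm_num)

noncomputable def DD (m n : ℕ) : ℚ := if n = 0 then 0 ^ m - (-1) ^ m else 0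

noncomputable def FF (m n : ℕ) : ℚ :=
  (2 ^ m - 1) ^ n - SS m n - (2 ^ n) ^ m + 2 * (2 ^ n - 1) ^ m - (2 ^ n - 1 - 1) ^ m

lemma GG_DD : GG DD = 1 - ExpNeg := by
  ext N
  simp only [GG, ExpNeg, PowerSeries.coeff_mk, map_sub, PowerSeries.coeff_one]
  rw [Finset.sum_eq_single (N, 0)]
  · rcases N with _ | N
    · simp [DD]
    · simp [DD, neg_div]
  · rintro ⟨a, b⟩ h hne
    simp only [Finset.HasAntidiagonal.mem_antidiagonal] at h
    have : b ≠ 0 := by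
      rintro rfl
      exact hne (by simp at h; simp [h])
    simp [DD, this]
  · simp

lemma FF_zero_right (m : ℕ) : FF m 0 = DD m 0 := by
  have h : SS m 0 = 0 ^ m := by
    have := congrFun (congrFun (opL_pow (fun _ => 1)) m) 0
    simp only [one_pow, sub_self] at this
    rw [← this]
    simp [SS, opL]
  rw [FF, DD, h]
  norm_num
  rcases m with _ | m
  · norm_num
  · simp

lemma FF_zero_left (n : ℕ) (hn : n ≠ 0) : FF 0 n = 0 := by
  simp [FF, SS, opL, hn]
  norm_num

lemma egf_eq : egf2 bIsoNoIso = GG (fun m n => FF m n - DD m n) := by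
  ext N
  simp only [GG, egf2, PowerSeries.coeff_mk]
  rw [Finset.sum_filter]
  refine Finset.sum_congr rfl ?_
  rintro ⟨m, n⟩ -
  dsimp only
  by_cases hn : n = 0
  · subst hn
    simp [FF_zero_right]
  by_cases hm : m = 0
  · subst hm
    simp [FF_zero_left n hn, DD, hn]
  rw [if_pos (by omega), b_eq m n (by omega), FF, DD, if_neg hn, sub_zero]

lemma GG_add (f g : ℕ → ℕ → ℚ) : GG (fun m n => f m n + g m n) = GG f + GG g := by
  ext N
  simp [GG, add_div, Finset.sum_add_distrib]

lemma GG_sub (f g : ℕ → ℕ → ℚ) : GG (fun m n => f m n - g m n) = GG f - GG g := by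
  ext N
  simp [GG, sub_div, Finset.sum_sub_distrib]

theorem egf_isoNoIso :
    egf2 bIsoNoIso = (1 - ExpNeg) * ((2 * ExpNeg - 1) * Psi - 1) := by
  have p1 : Psi = GG (fun m n => (2 ^ n) ^ m) := by
    ext N
    simp only [GG, Psi, PowerSeries.coeff_mk, ← pow_mul, mul_comm]
  have p2 : Psi = GG (fun m n => (2 ^ m) ^ n) := by
    rw [p1, ← GG_swap]
  have q1 : ExpNeg * Psi = GG (fun m n => (2 ^ n - 1) ^ m) := by
    rw [p1, E_row (fun n => 2 ^ n)]
  have q2 : ExpNeg * Psi = GG (fun m n => (2 ^ m - 1) ^ n) := by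
    rw [p2, E_col (fun n => 2 ^ n)]
  have r1 : ExpNeg * (ExpNeg * Psi) = GG (fun m n => (2 ^ n - 1 - 1) ^ m) := by
    rw [q1, E_row (fun n => 2 ^ n - 1)]
  have r2 : ExpNeg * (ExpNeg * Psi) = GG SS := by
    rw [q2, expNeg_mul_GG, SS]
  rw [egf_eq, GG_sub, GG_DD]
  unfold FF
  simp only [two_mul]
  rw [GG_sub, GG_add, GG_sub, GG_sub, GG_add, ← p1, ← q1, ← q2, ← r1, ← r2]
  ring
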